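/- Let D ≥ 3 be an odd integer and n ≥ 1. If x, y, z ∈ (ℤ_D)^n are pairwise distinct and form a three-term arithmetic progression (i.e. x + z = 2y), then for every coordinate i ∈ {1,…,n}, the values x_i, y_i, z_i are either all equal or pairwise distinct. Consequently, a sunflower-free family in (ℤ_D)^n (D odd) contains no nontrivial three-term arithmetic progression. -/

import Mathlib

/-- Exactly two of `a`, `b`, `c` are equal. -/
def ExactlyTwoEq {β : Type*} (a b c : β) : Prop :=
  (a = b ∧ a ≠ c) ∨ (a = c ∧ a ≠ b) ∨ (b = c ∧ a ≠ b)

/-- A family `F ⊆ (ℤ_D)^n` is sunflower-free if for every three distinct members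
there is a coordinate where exactly two of the three entries agree. -/
def SunflowerFreeZMod (D n : ℕ) (F : Set (Fin n → ZMod D)) : Prop :=
  ∀ x ∈ F, ∀ y ∈ F, ∀ z ∈ F, x ≠ y → y ≠ z → x ≠ z →
    ∃ i : Fin n, ExactlyTwoEq (x i) (y i) (z i)

theorem zmod_double_inj (D : ℕ) (hodd : Odd D) (a b : ZMod D) (h : a + a = b + b) : a = b := by
  have hu : IsUnit ((2 : ℕ) : ZMod D) :=
    (ZMod.isUnit_iff_coprime 2 D).2 (Nat.coprime_two_left.2 hodd)
  apply hu.mul_left_cancel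
  push_cast
  rw [two_mul, two_mul, h]

theorem threeAP_coords_all_eq_or_distinct (D n : ℕ) (hD : 3 ≤ D) (hodd : Odd D)
    (hn : 1 ≤ n) :
    (∀ x y z : Fin n → ZMod D, x ≠ y → y ≠ z → x ≠ z → x + z = y + y →
      ∀ i : Fin n, (x i = y i ∧ y i = z i) ∨
        (x i ≠ y i ∧ y i ≠ z i ∧ x i ≠ z i)) ∧
    (∀ F : Set (Fin n → ZMod D), SunflowerFreeZMod D n F →
      ¬ ∃ x ∈ F, ∃ y ∈ F, ∃ z ∈ F, x ≠ y ∧ y ≠ z ∧ x ≠ z ∧ x + z = y + y) := by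
  have key : ∀ x y z : Fin n → ZMod D, x + z = y + y →
      ∀ i : Fin n, (x i = y i ∧ y i = z i) ∨
        (x i ≠ y i ∧ y i ≠ z i ∧ x i ≠ z i) := by
    intro x y z h i
    have hi : x i + z i = y i + y i := congrFun h i
    by_cases h1 : x i = y i
    · left
      rw [h1] at hi
      exact ⟨h1, (add_left_cancel hi).symm⟩
    · right
      refine ⟨h1, fun h2 => ?_, fun h3 => ?_⟩
      · rw [← h2] at hi
        exact h1 (add_right_cancel hi)
      · rw [← h3] at hi
        exact h1 (zmod_double_inj D hodd _ _ hi)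
  refine ⟨fun x y z _ _ _ h => key x y z h, ?_⟩
  rintro F hF ⟨x, hx, y, hy, z, hz, h1, h2, h3, h⟩
  obtain ⟨i, hi⟩ := hF x hx y hy z hz h1 h2 h3
  have hk := key x y z h i
  unfold ExactlyTwoEq at hi
  grind
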